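/- Let a⁺ ∈ ℝ, let m be a positive integer, ε > 0, and define Q⁺ : ℂ → ℂ by Q⁺(μ) = (2/3) e^{iπ/4} (a⁺ − μ)^{3/2} (principal branch). For each positive integer k set r_k = ( (3π/2)(k − 1/4) )^{2/3} and μ_k = a⁺ − e^{iπ/6} (mε)^{1/3} r_k. Then Im μ_k < 0, |μ_k − a⁺| = (mε)^{1/3} r_k, Re Q⁺(μ_k) = 0, and Im Q⁺(μ_k) = (mε)^{1/2} (kπ − π/4). -/

import Mathlib

/-!
Since `π/4 + (3/2)(π/6) = π/2`, the phase `Q⁺` takes the value `(2/3) r^{3/2} i` at the point of the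
ray `a⁺ - e^{iπ/6} ℝ_{≥0}` at distance `r` from `a⁺`: the ray lies on the spectral curve
`Re Q⁺ = 0`, and the quantization condition becomes the real equation
`(2/3) r^{3/2} = (mε)^{1/2} (kπ - π/4)`, solved by `r = (mε)^{1/3} r_k`.
-/

section

open Complex

theorem exp_cpow_of_im_mem_Ioc {z : ℂ} (hz : z.im ∈ Set.Ioc (-Real.pi) Real.pi) (s : ℂ) :
    exp z ^ s = exp (z * s) := by
  rw [cpow_def_of_ne_zero (exp_ne_zero z), log_exp hz.1 hz.2]

theorem ofReal_mul_cpow_of_nonneg {r : ℝ} (hr : 0 ≤ r) (z s : ℂ) :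
    ((r : ℂ) * z) ^ s = (r : ℂ) ^ s * z ^ s := by
  rcases eq_or_ne s 0 with rfl | hs
  · simp only [cpow_zero, mul_one]
  rcases eq_or_ne z 0 with rfl | hz
  · simp only [mul_zero, zero_cpow hs]
  rcases hr.eq_or_lt with rfl | hr
  · simp only [ofReal_zero, zero_mul, zero_cpow hs]
  have hr' : (r : ℂ) ≠ 0 := ofReal_ne_zero.mpr hr.ne'
  rw [cpow_def_of_ne_zero (mul_ne_zero hr' hz), cpow_def_of_ne_zero hr', cpow_def_of_ne_zero hz,
    log_ofReal_mul hr hz, ← ofReal_log hr.le, add_mul, exp_add]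

/-- The WKBJ phase function `Q⁺` of the locally linear potential `a + (r - r₀)`, on the principal
branch. The boundary value `a` may be complex. -/
noncomputable def wkbjPhase (a μ : ℂ) : ℂ :=
  (2 / 3) * exp (I * Real.pi / 4) * (a - μ) ^ ((3 : ℂ) / 2)

/-- For `r ≥ 0`, the point at distance `r` from `a` on the ray that carries the eigenvalue
approximations `μ_k`. -/
noncomputable def spectralRay (a : ℂ) (r : ℝ) : ℂ :=
  a - exp (I * Real.pi / 6) * r

/-- The rescaled distance `r_k` of the `k`-th quantized point from the boundary value, with a real
parameter `κ` in place of the index `k`. For `κ < 1/4` the real power is a junk value. -/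
noncomputable def quantizedRadius (κ : ℝ) : ℝ :=
  ((3 * Real.pi / 2) * (κ - 1 / 4)) ^ ((2 : ℝ) / 3)

theorem quantizedRadius_pos {κ : ℝ} (hκ : 1 / 4 < κ) : 0 < quantizedRadius κ :=
  Real.rpow_pos_of_pos (mul_pos (by positivity) (sub_pos.mpr hκ)) _

theorem spectralRay_im_lt (a : ℂ) {r : ℝ} (hr : 0 < r) : (spectralRay a r).im < a.im := by
  have hexp : (exp (I * Real.pi / 6)).im = 1 / 2 := by
    rw [show I * Real.pi / 6 = ((Real.pi / 6 : ℝ) : ℂ) * I by push_cast; ring,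
      exp_ofReal_mul_I_im, Real.sin_pi_div_six]
  rw [spectralRay, sub_im, im_mul_ofReal, hexp]
  linarith

theorem norm_spectralRay_sub (a : ℂ) {r : ℝ} (hr : 0 ≤ r) : ‖spectralRay a r - a‖ = r := by
  have hexp : ‖exp (I * Real.pi / 6)‖ = 1 := by
    rw [show I * Real.pi / 6 = I * ((Real.pi / 6 : ℝ) : ℂ) by push_cast; ring,
      norm_exp_I_mul_ofReal]
  rw [spectralRay, sub_sub_cancel_left, norm_neg, norm_mul, hexp, one_mul,
    Complex.norm_of_nonneg hr]

theorem wkbjPhase_spectralRay (a : ℂ) {r : ℝ} (hr : 0 ≤ r) :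
    wkbjPhase a (spectralRay a r) = ((2 / 3 * r ^ ((3 : ℝ) / 2) : ℝ) : ℂ) * I := by
  have him : (I * Real.pi / 6).im ∈ Set.Ioc (-Real.pi) Real.pi := by
    rw [show (I * Real.pi / 6).im = Real.pi / 6 by simp]
    constructor <;> linarith [Real.pi_pos]
  have hrot : exp (I * Real.pi / 4) * exp (I * Real.pi / 6 * (3 / 2)) = I := by
    rw [← exp_add, show I * Real.pi / 4 + I * Real.pi / 6 * (3 / 2) = Real.pi / 2 * I by ring,
      exp_pi_div_two_mul_I]
  calc wkbjPhase a (spectralRay a r)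
      = 2 / 3 * exp (I * Real.pi / 4) * ((r : ℂ) * exp (I * Real.pi / 6)) ^ ((3 : ℂ) / 2) := by
        rw [wkbjPhase, spectralRay, sub_sub_cancel, mul_comm (r : ℂ)]
    _ = 2 / 3 * (r : ℂ) ^ ((3 : ℂ) / 2) *
          (exp (I * Real.pi / 4) * exp (I * Real.pi / 6 * (3 / 2))) := by
        rw [ofReal_mul_cpow_of_nonneg hr, exp_cpow_of_im_mem_Ioc him]
        ring
    _ = ((2 / 3 * r ^ ((3 : ℝ) / 2) : ℝ) : ℂ) * I := by
        rw [hrot]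
        simp only [ofReal_mul, ofReal_cpow hr, ofReal_div, ofReal_ofNat]

theorem two_thirds_mul_quantizedRadius_rpow {h κ : ℝ} (hh : 0 ≤ h) (hκ : 1 / 4 ≤ κ) :
    2 / 3 * (h ^ ((1 : ℝ) / 3) * quantizedRadius κ) ^ ((3 : ℝ) / 2) =
      h ^ ((1 : ℝ) / 2) * (κ * Real.pi - Real.pi / 4) := by
  have hx : 0 ≤ (3 * Real.pi / 2) * (κ - 1 / 4) := mul_nonneg (by positivity) (sub_nonneg.mpr hκ)
  rw [quantizedRadius, Real.mul_rpow (by positivity) (by positivity), ← Real.rpow_mul hh,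
    ← Real.rpow_mul hx, show (1 : ℝ) / 3 * (3 / 2) = 1 / 2 by norm_num,
    show (2 : ℝ) / 3 * (3 / 2) = 1 by norm_num, Real.rpow_one]
  ring

theorem eigenvalue_scaling_linear_branch_general (a : ℂ) {h κ : ℝ} (hh : 0 < h)
    (hκ : 1 / 4 < κ) :
    let r := h ^ ((1 : ℝ) / 3) * quantizedRadius κ
    (spectralRay a r).im < a.im ∧
      ‖spectralRay a r - a‖ = r ∧
      (wkbjPhase a (spectralRay a r)).re = 0 ∧
      (wkbjPhase a (spectralRay a r)).im =
        h ^ ((1 : ℝ) / 2) * (κ * Real.pi - Real.pi / 4) := by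
  intro r
  have hr : 0 < r := mul_pos (Real.rpow_pos_of_pos hh _) (quantizedRadius_pos hκ)
  have hphase : wkbjPhase a (spectralRay a r) =
      ((h ^ ((1 : ℝ) / 2) * (κ * Real.pi - Real.pi / 4) : ℝ) : ℂ) * I := by
    rw [wkbjPhase_spectralRay a hr.le, two_thirds_mul_quantizedRadius_rpow hh.le hκ.le]
  refine ⟨spectralRay_im_lt a hr, norm_spectralRay_sub a hr.le, ?_, ?_⟩
  · rw [hphase, re_ofReal_mul, I_re, mul_zero]
  · rw [hphase, im_ofReal_mul, I_im, mul_one]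

end

/-- For `Q⁺(μ) = (2/3) e^{iπ/4} (a⁺ − μ)^{3/2}` (principal branch),
`r_k = ((3π/2)(k − 1/4))^{2/3}` and `μ_k = a⁺ − e^{iπ/6} (mε)^{1/3} r_k`, one has for
every positive integer `k`: `Im μ_k < 0`, `|μ_k − a⁺| = (mε)^{1/3} r_k`,
`Re Q⁺(μ_k) = 0` and `Im Q⁺(μ_k) = (mε)^{1/2}(kπ − π/4)`. -/
theorem eigenvalue_scaling_linear_branch
    (ap : ℝ) (m : ℕ) (hm : 0 < m) (ε : ℝ) (hε : 0 < ε)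
    (Q : ℂ → ℂ)
    (hQ : ∀ μ : ℂ, Q μ = (2/3) * Complex.exp (Complex.I * Real.pi / 4)
        * (((ap : ℂ) - μ) ^ ((3:ℂ)/2)))
    (rk : ℕ → ℝ)
    (hrk : ∀ k : ℕ, rk k = ((3 * Real.pi / 2) * ((k : ℝ) - 1/4)) ^ ((2:ℝ)/3))
    (μk : ℕ → ℂ)
    (hμk : ∀ k : ℕ, μk k = (ap : ℂ) - Complex.exp (Complex.I * Real.pi / 6)
        * ((((m : ℝ) * ε) ^ ((1:ℝ)/3) : ℝ) : ℂ) * ((rk k : ℝ) : ℂ)) :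
    ∀ k : ℕ, 0 < k →
      (μk k).im < 0 ∧
      ‖μk k - (ap : ℂ)‖ = ((m : ℝ) * ε) ^ ((1:ℝ)/3) * rk k ∧
      (Q (μk k)).re = 0 ∧
      (Q (μk k)).im = ((m : ℝ) * ε) ^ ((1:ℝ)/2) * ((k : ℝ) * Real.pi - Real.pi / 4) := by
  intro k hk
  have hκ : (1 / 4 : ℝ) < k := by linarith [Nat.one_le_cast (α := ℝ).mpr hk]
  rw [hQ, hμk, hrk, mul_assoc, ← Complex.ofReal_mul]
  exact eigenvalue_scaling_linear_branch_general ap (by positivity : 0 < (m : ℝ) * ε) hκ
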